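/- arXiv:1407.7066 — 7 statements merged into one kernel-verified Lean document; each statement's English description precedes it below -/
import Mathlib

section
/- The set 𝕊 = {0} ∪ (ℕ₀ × (0,∞]), equipped with the lexicographic order (0 is the least element; (i,t) < (j,s) iff i < j, or i = j and t < s), the addition (i,t)+(j,u) = (i, t+u) if i = j, = (i,t) if i > j, = (j,u) if j > i, with 0 as additive identity, and the multiplication (i,t)(j,u) = (i+j, tu) with 0·x = x·0 = 0, is an ordered commutative semi-ring with multiplicative identity (0,1) and additive identity 0. That is: the order is total with 0 least and a+b ≥ b for all a,b; addition is commutative and associative with identity 0; multiplication is commutative and associative with identity (0,1), distributes over addition, and 0 is an annihilator. -/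
/-!
An element `(i, t)` behaves like a magnitude of order `i` with coefficient `t`. A sum keeps only the
terms of highest order and adds their coefficients in `ℝ≥0∞`, while a product adds the orders and
multiplies the coefficients. Each law therefore splits according to how the orders compare. When the
orders differ, it is a property of the order on `ℕ` (for distributivity: translation by a natural
number preserves `<`); when they agree, it is the same law for the coefficients.
The rules `sadd_of_lt`, `sadd_of_gt` and `sadd_same` carry out this splitting. The law `a + b ≥ b`
needs only the weak inequality, which is what makes `∞` harmless: `∞ + ∞ = ∞`.
-/

open ENNReal

/-- The positive extended reals `(0,∞]`. -/
abbrev PosE : Type := {t : ℝ≥0∞ // 0 < t}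

/-- `𝕊 = {0} ∪ (ℕ₀ × (0,∞])`; `none` plays the role of the zero element `0`. -/
abbrev SS : Type := Option (ℕ × PosE)

def Szero : SS := none

/-- The element `(0,1)`. -/
noncomputable def Sone : SS := some (0, ⟨1, one_pos⟩)

/-- The lexicographic strict order on `𝕊`, with `0` the least element:
`(i,t) < (j,s)` iff `i < j`, or `i = j` and `t < s`. -/
def Slt : SS → SS → Prop
  | none, none => False
  | none, some _ => True
  | some _, none => False
  | some x, some y => x.1 < y.1 ∨ (x.1 = y.1 ∧ x.2.1 < y.2.1)

def Sle (x y : SS) : Prop := Slt x y ∨ x = y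

/-- `(i,t)+(j,u) = (i,t+u)` if `i = j`, `(i,t)` if `i > j`, `(j,u)` if `j > i`;
`0` is the additive identity. -/
noncomputable def Sadd : SS → SS → SS
  | none, y => y
  | x, none => x
  | some x, some y =>
    if x.1 < y.1 then some y
    else if y.1 < x.1 then some x
    else some (x.1, ⟨x.2.1 + y.2.1, lt_of_lt_of_le x.2.2 le_self_add⟩)

/-- `(i,t)(j,u) = (i+j, tu)`, and `0·x = x·0 = 0`. -/
noncomputable def Smul : SS → SS → SS
  | none, _ => none
  | _, none => none
  | some x, some y =>
    some (x.1 + y.1, ⟨x.2.1 * y.2.1, ENNReal.mul_pos x.2.2.ne' y.2.2.ne'⟩)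

theorem sadd_of_lt {i j : ℕ} (s t : PosE) (h : i < j) :
    Sadd (some (i, s)) (some (j, t)) = some (j, t) := by
  simp [Sadd, h]

theorem sadd_of_gt {i j : ℕ} (s t : PosE) (h : j < i) :
    Sadd (some (i, s)) (some (j, t)) = some (i, s) := by
  simp [Sadd, h, h.le]

theorem sadd_same (i : ℕ) (s t : PosE) :
    Sadd (some (i, s)) (some (i, t)) =
      some (i, ⟨s.1 + t.1, lt_of_lt_of_le s.2 le_self_add⟩) := by
  simp [Sadd]

theorem sadd_none_left (a : SS) : Sadd none a = a := by
  cases a <;> rfl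

theorem sadd_none_right (a : SS) : Sadd a none = a := by
  cases a <;> rfl

theorem smul_some_some (i j : ℕ) (s t : PosE) :
    Smul (some (i, s)) (some (j, t)) =
      some (i + j, ⟨s.1 * t.1, ENNReal.mul_pos s.2.ne' t.2.ne'⟩) := rfl

theorem smul_none_left (a : SS) : Smul none a = none := by
  cases a <;> rfl

theorem smul_none_right (a : SS) : Smul a none = none := by
  cases a <;> rfl

theorem slt_trichotomy (x y : SS) : Slt x y ∨ x = y ∨ Slt y x := by
  rcases x with _ | ⟨i, s⟩ <;> rcases y with _ | ⟨j, t⟩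
  · exact Or.inr (Or.inl rfl)
  · exact Or.inl trivial
  · exact Or.inr (Or.inr trivial)
  · rcases lt_trichotomy i j with h | rfl | h
    · exact Or.inl (Or.inl h)
    · rcases lt_trichotomy s t with h | rfl | h
      · exact Or.inl (Or.inr ⟨rfl, h⟩)
      · exact Or.inr (Or.inl rfl)
      · exact Or.inr (Or.inr (Or.inr ⟨rfl, h⟩))
    · exact Or.inr (Or.inr (Or.inl h))

theorem slt_trans (x y z : SS) (hxy : Slt x y) (hyz : Slt y z) : Slt x z := by
  rcases x with _ | ⟨i, s⟩ <;> rcases y with _ | ⟨j, t⟩ <;> rcases z with _ | ⟨k, u⟩ <;>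
    simp only [Slt] at hxy hyz ⊢
  rcases hxy with h | ⟨rfl, h⟩ <;> rcases hyz with h' | ⟨rfl, h'⟩
  · exact Or.inl (h.trans h')
  · exact Or.inl h
  · exact Or.inl h'
  · exact Or.inr ⟨rfl, h.trans h'⟩

theorem slt_irrefl (x : SS) : ¬ Slt x x := by
  rcases x with _ | ⟨i, s⟩ <;> simp [Slt]

theorem sle_sadd_left (a b : SS) : Sle b (Sadd a b) := by
  rcases a with _ | ⟨i, s⟩ <;> rcases b with _ | ⟨j, t⟩
  · exact Or.inr rfl
  · exact Or.inr rfl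
  · exact Or.inl trivial
  · rcases lt_trichotomy i j with h | rfl | h
    · rw [sadd_of_lt s t h]
      exact Or.inr rfl
    · rw [sadd_same]
      -- Equality occurs exactly when `t = ∞`.
      rcases (le_add_self : t.1 ≤ s.1 + t.1).lt_or_eq with h | h
      · exact Or.inl (Or.inr ⟨rfl, h⟩)
      · exact Or.inr (congrArg some (Prod.ext rfl (Subtype.ext h)))
    · rw [sadd_of_gt s t h]
      exact Or.inl (Or.inl h)

theorem sadd_comm (a b : SS) : Sadd a b = Sadd b a := by
  rcases a with _ | ⟨i, s⟩ <;> rcases b with _ | ⟨j, t⟩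
  · rfl
  · rfl
  · rfl
  · rcases lt_trichotomy i j with h | rfl | h
    · rw [sadd_of_lt s t h, sadd_of_gt t s h]
    · simp only [sadd_same, add_comm]
    · rw [sadd_of_gt s t h, sadd_of_lt t s h]

theorem sadd_assoc (a b c : SS) : Sadd (Sadd a b) c = Sadd a (Sadd b c) := by
  rcases a with _ | ⟨i, s⟩
  · simp only [sadd_none_left]
  rcases b with _ | ⟨j, t⟩
  · simp only [sadd_none_left, sadd_none_right]
  rcases c with _ | ⟨k, u⟩
  · simp only [sadd_none_right]
  rcases lt_trichotomy i j with h | rfl | h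
  · rw [sadd_of_lt s t h]
    rcases lt_trichotomy j k with h' | rfl | h'
    · rw [sadd_of_lt t u h', sadd_of_lt s u (h.trans h')]
    · rw [sadd_same, sadd_of_lt _ _ h]
    · rw [sadd_of_gt t u h', sadd_of_lt s t h]
  · rcases lt_trichotomy i k with h' | rfl | h'
    · rw [sadd_same, sadd_of_lt _ _ h', sadd_of_lt t u h', sadd_of_lt s u h']
    · simp only [sadd_same, add_assoc]
    · rw [sadd_same, sadd_of_gt _ _ h', sadd_of_gt t u h', sadd_same]
  · rw [sadd_of_gt s t h]
    rcases lt_trichotomy j k with h' | rfl | h'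
    · rw [sadd_of_lt t u h']
    · rw [sadd_same, sadd_of_gt _ _ h, sadd_of_gt _ _ h]
    · rw [sadd_of_gt t u h', sadd_of_gt s t h, sadd_of_gt s u (h'.trans h)]

theorem smul_comm_SS (a b : SS) : Smul a b = Smul b a := by
  rcases a with _ | ⟨i, s⟩ <;> rcases b with _ | ⟨j, t⟩
  · rfl
  · rfl
  · rfl
  · simp only [smul_some_some, add_comm, mul_comm]

theorem smul_assoc_SS (a b c : SS) : Smul (Smul a b) c = Smul a (Smul b c) := by
  rcases a with _ | ⟨i, s⟩
  · simp only [smul_none_left]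
  rcases b with _ | ⟨j, t⟩
  · simp only [smul_none_left, smul_none_right]
  rcases c with _ | ⟨k, u⟩
  · simp only [smul_none_right]
  simp only [smul_some_some, add_assoc, mul_assoc]

theorem sone_smul (a : SS) : Smul Sone a = a := by
  rcases a with _ | ⟨i, s⟩
  · rfl
  · simp only [Sone, smul_some_some, zero_add, one_mul]

theorem smul_sadd (a b c : SS) : Smul a (Sadd b c) = Sadd (Smul a b) (Smul a c) := by
  rcases a with _ | ⟨i, s⟩
  · simp only [smul_none_left, sadd_none_left]
  rcases b with _ | ⟨j, t⟩
  · simp only [sadd_none_left, smul_none_right]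
  rcases c with _ | ⟨k, u⟩
  · simp only [sadd_none_right, smul_none_right]
  rcases lt_trichotomy j k with h | rfl | h
  · rw [sadd_of_lt t u h]
    simp only [smul_some_some]
    rw [sadd_of_lt _ _ (Nat.add_lt_add_left h i)]
  · simp only [sadd_same, smul_some_some, mul_add]
  · rw [sadd_of_gt t u h]
    simp only [smul_some_some]
    rw [sadd_of_gt _ _ (Nat.add_lt_add_left h i)]

theorem szero_sle (x : SS) : Sle Szero x := by
  rcases x with _ | x
  · exact Or.inr rfl
  · exact Or.inl trivial

/-- `𝕊` is an ordered commutative semi-ring with multiplicative identity `(0,1)`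
and additive identity `0`. -/
theorem stmt0 :
    -- the order is total (trichotomous, transitive, irreflexive)
    (∀ x y : SS, Slt x y ∨ x = y ∨ Slt y x) ∧
    (∀ x y z : SS, Slt x y → Slt y z → Slt x z) ∧
    (∀ x : SS, ¬ Slt x x) ∧
    -- 0 is the least element
    (∀ x : SS, Sle Szero x) ∧
    -- a + b ≥ b
    (∀ a b : SS, Sle b (Sadd a b)) ∧
    -- addition is commutative and associative with identity 0
    (∀ a b : SS, Sadd a b = Sadd b a) ∧
    (∀ a b c : SS, Sadd (Sadd a b) c = Sadd a (Sadd b c)) ∧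
    (∀ a : SS, Sadd Szero a = a ∧ Sadd a Szero = a) ∧
    -- multiplication is commutative and associative with identity (0,1)
    (∀ a b : SS, Smul a b = Smul b a) ∧
    (∀ a b c : SS, Smul (Smul a b) c = Smul a (Smul b c)) ∧
    (∀ a : SS, Smul Sone a = a ∧ Smul a Sone = a) ∧
    -- multiplication distributes over addition
    (∀ a b c : SS, Smul a (Sadd b c) = Sadd (Smul a b) (Smul a c)) ∧
    -- 0 is an annihilator
    (∀ a : SS, Smul Szero a = Szero ∧ Smul a Szero = Szero) := by
  exact ⟨slt_trichotomy, slt_trans, slt_irrefl, szero_sle, sle_sadd_left, sadd_comm, sadd_assoc,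
    fun a => ⟨sadd_none_left a, sadd_none_right a⟩, smul_comm_SS, smul_assoc_SS,
    fun a => ⟨sone_smul a, (smul_comm_SS a Sone).trans (sone_smul a)⟩, smul_sadd,
    fun a => ⟨smul_none_left a, smul_none_right a⟩⟩
end

section
/- If A is an ordered abelian group or an ordered abelian semi-group and B is an ordered abelian semi-group, then A ⊼ B (the insertion of B into A) is an ordered abelian semi-group: the order on (A × (B∖{0})) ∪ {0} given by 0 < (g,s) for all (g,s), and (g,s) < (h,t) iff g < h, or g = h and s < t, is a total order with least element 0, and the addition (g,s)+(h,t) = (g,s) if g > h, = (h,t) if h > g, = (g, s+t) if g = h, with 0+x = x+0 = x, is commutative and associative with identity 0 and satisfies x + y ≥ y for all x, y. -/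
/-!
The elements of `A ⊼ B` other than `0` are pairs `(g, s)` ordered lexicographically, so the order
axioms are those of a lexicographic order with a bottom element adjoined. In a sum only the
summands of maximal first coordinate survive, and their second coordinates are added in `B`; this
description is symmetric and independent of bracketing, which gives commutativity and
associativity. The addition stays in the carrier because `t ≤ s + t` and `0 ≤ t` in `B` force
`s + t ≠ 0` when `t ≠ 0`; the same inequality `t ≤ s + t` gives `y ≤ x + y`. Only the linear order
of `A` matters. The lemmas `insAdd_of_lt`, `insAdd_of_gt` and `insAdd_same` evaluate the addition in
the three cases, and associativity is then a comparison of the three first coordinates.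
-/

/-- `G` (with its linear order) is an ordered abelian semi-group with respect to
`add` and `zero`. -/
def IsOrdAbSemigroup {G : Type*} [LinearOrder G] (add : G → G → G) (zero : G) : Prop :=
  (∀ a b c : G, add (add a b) c = add a (add b c)) ∧
  (∀ a : G, add zero a = a) ∧ (∀ a : G, add a zero = a) ∧
  (∀ a b : G, add a b = add b a) ∧
  (∀ a : G, zero ≤ a) ∧ (∀ a b : G, b ≤ add a b)

/-- `G` (with its linear order) is an ordered abelian group with respect to
`add`, `zero`, `neg`: a totally ordered abelian group with translation-invariant order. -/
def IsOrdAbGroup {G : Type*} [LinearOrder G] (add : G → G → G) (zero : G) (neg : G → G) : Prop :=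
  (∀ a b c : G, add (add a b) c = add a (add b c)) ∧
  (∀ a : G, add zero a = a) ∧ (∀ a : G, add a zero = a) ∧
  (∀ a b : G, add a b = add b a) ∧
  (∀ a : G, add (neg a) a = zero) ∧
  (∀ a b c : G, a ≤ b → add c a ≤ add c b)

/-- The carrier `(A × (B∖{0})) ∪ {0}` of the insertion `A ⊼ B`;
`none` is the (new) zero element. -/
abbrev Ins (A : Type*) {B : Type*} (zB : B) : Type _ := Option (A × {b : B // b ≠ zB})

/-- The order on `A ⊼ B`: `0 < (g,s)` for all `(g,s)`, and
`(g,s) < (h,t)` iff `g < h`, or `g = h` and `s < t`. -/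
def insLt {A B : Type*} [LT A] [LT B] (zB : B) : Ins A zB → Ins A zB → Prop
  | none, none => False
  | none, some _ => True
  | some _, none => False
  | some x, some y => x.1 < y.1 ∨ (x.1 = y.1 ∧ x.2.1 < y.2.1)

def insLe {A B : Type*} [LT A] [LT B] (zB : B) (x y : Ins A zB) : Prop :=
  insLt zB x y ∨ x = y

open Classical in
/-- The addition of `A ⊼ B`: `(g,s)+(h,t) = (g,s)` if `g > h`, `(h,t)` if `h > g`,
`(g, s+t)` if `g = h`, and `0 + x = x + 0 = x`.  (The case `s + t = 0`, which never
occurs when `B` is an ordered abelian semi-group, is sent to `0`.) -/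
noncomputable def insAdd {A B : Type*} [LinearOrder A] (addB : B → B → B) (zB : B) :
    Ins A zB → Ins A zB → Ins A zB
  | none, y => y
  | x, none => x
  | some x, some y =>
    if x.1 < y.1 then some y
    else if y.1 < x.1 then some x
    else if h : addB x.2.1 y.2.1 = zB then none
    else some (x.1, ⟨addB x.2.1 y.2.1, h⟩)

/-- The nonzero elements of an ordered abelian semi-group are closed under addition. -/
lemma IsOrdAbSemigroup.add_ne_zero {B : Type*} [LinearOrder B] {addB : B → B → B} {zB : B}
    (hB : IsOrdAbSemigroup addB zB) (s t : {b : B // b ≠ zB}) : addB s.1 t.1 ≠ zB := by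
  obtain ⟨-, -, -, -, h0, hle⟩ := hB
  intro h
  exact t.2 (le_antisymm ((hle s.1 t.1).trans_eq h) (h0 t.1))

section insAdd

variable {A B : Type*} [LinearOrder A] (addB : B → B → B) (zB : B)

lemma insAdd_none_left (x : Ins A zB) : insAdd addB zB none x = x := by
  cases x <;> rfl

lemma insAdd_none_right (x : Ins A zB) : insAdd addB zB x none = x := by
  cases x <;> rfl

lemma insAdd_of_lt {g h : A} (s t : {b : B // b ≠ zB}) (hgh : g < h) :
    insAdd addB zB (some (g, s)) (some (h, t)) = some (h, t) := by
  simp [insAdd, hgh]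

lemma insAdd_of_gt {g h : A} (s t : {b : B // b ≠ zB}) (hgh : h < g) :
    insAdd addB zB (some (g, s)) (some (h, t)) = some (g, s) := by
  simp [insAdd, hgh, hgh.not_gt]

lemma insAdd_same (g : A) (s t : {b : B // b ≠ zB}) (hst : addB s.1 t.1 ≠ zB) :
    insAdd addB zB (some (g, s)) (some (g, t)) = some (g, ⟨addB s.1 t.1, hst⟩) := by
  simp [insAdd, hst]

end insAdd

/-- If `A` is an ordered abelian group or an ordered abelian semi-group and `B` is an
ordered abelian semi-group, then `A ⊼ B` is an ordered abelian semi-group. -/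
theorem stmt3 {A B : Type*} [LinearOrder A] [LinearOrder B]
    (addA : A → A → A) (zA : A) (negA : A → A) (addB : B → B → B) (zB : B)
    (hA : IsOrdAbGroup addA zA negA ∨ IsOrdAbSemigroup addA zA)
    (hB : IsOrdAbSemigroup addB zB) :
    -- the order is total (trichotomous, transitive, irreflexive)
    (∀ x y : Ins A zB, insLt zB x y ∨ x = y ∨ insLt zB y x) ∧
    (∀ x y z : Ins A zB, insLt zB x y → insLt zB y z → insLt zB x z) ∧
    (∀ x : Ins A zB, ¬ insLt zB x x) ∧
    -- 0 is the least element
    (∀ x : Ins A zB, insLe zB none x) ∧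
    -- the addition is commutative and associative with identity 0
    (∀ x y : Ins A zB, insAdd addB zB x y = insAdd addB zB y x) ∧
    (∀ x y z : Ins A zB,
      insAdd addB zB (insAdd addB zB x y) z = insAdd addB zB x (insAdd addB zB y z)) ∧
    (∀ x : Ins A zB, insAdd addB zB none x = x ∧ insAdd addB zB x none = x) ∧
    -- x + y ≥ y
    (∀ x y : Ins A zB, insLe zB y (insAdd addB zB x y)) := by
  have hne := hB.add_ne_zero
  obtain ⟨hassoc, -, -, hcomm, -, hle⟩ := hB
  refine ⟨?_, ?_, ?_, ?_, ?_, ?_,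
    fun x => ⟨insAdd_none_left addB zB x, insAdd_none_right addB zB x⟩, ?_⟩
  · rintro (_ | ⟨g, s, hs⟩) (_ | ⟨h, t, ht⟩)
    · exact Or.inr (Or.inl rfl)
    · exact Or.inl trivial
    · exact Or.inr (Or.inr trivial)
    · simp only [insLt, Option.some.injEq, Prod.mk.injEq, Subtype.mk.injEq]
      grind
  · rintro (_ | ⟨g, s, hs⟩) (_ | ⟨h, t, ht⟩) (_ | ⟨k, u, hu⟩) <;> simp only [insLt] <;> grind
  · rintro (_ | ⟨g, s, hs⟩) <;> simp [insLt]
  · rintro (_ | ⟨g, s, hs⟩) <;> simp [insLe, insLt]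
  · rintro (_ | ⟨g, s⟩) (_ | ⟨h, t⟩)
    · rfl
    · rfl
    · rfl
    · rcases lt_trichotomy g h with hgh | rfl | hgh
      · rw [insAdd_of_lt addB zB s t hgh, insAdd_of_gt addB zB t s hgh]
      · rw [insAdd_same addB zB g s t (hne s t), insAdd_same addB zB g t s (hne t s)]
        simp only [hcomm]
      · rw [insAdd_of_gt addB zB s t hgh, insAdd_of_lt addB zB t s hgh]
  · rintro (_ | ⟨g, s⟩) (_ | ⟨h, t⟩) (_ | ⟨k, u⟩) <;>
      try simp only [insAdd_none_left, insAdd_none_right]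
    rcases lt_trichotomy g h with hgh | rfl | hgh
    · rcases lt_trichotomy h k with hhk | rfl | hhk
      · simp only [insAdd_of_lt addB zB _ _ hgh, insAdd_of_lt addB zB _ _ hhk,
          insAdd_of_lt addB zB _ _ (hgh.trans hhk)]
      · simp only [insAdd_of_lt addB zB _ _ hgh, insAdd_same addB zB _ _ _ (hne _ _)]
      · simp only [insAdd_of_lt addB zB _ _ hgh, insAdd_of_gt addB zB _ _ hhk]
    · rcases lt_trichotomy g k with hgk | rfl | hgk
      · simp only [insAdd_same addB zB _ _ _ (hne _ _), insAdd_of_lt addB zB _ _ hgk]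
      · simp only [insAdd_same addB zB _ _ _ (hne _ _), hassoc]
      · simp only [insAdd_same addB zB _ _ _ (hne _ _), insAdd_of_gt addB zB _ _ hgk]
    · rcases lt_trichotomy h k with hhk | rfl | hhk
      · -- The middle summand is absorbed by either neighbour.
        simp only [insAdd_of_gt addB zB _ _ hgh, insAdd_of_lt addB zB _ _ hhk]
      · simp only [insAdd_of_gt addB zB _ _ hgh, insAdd_same addB zB _ _ _ (hne _ _)]
      · simp only [insAdd_of_gt addB zB _ _ hgh, insAdd_of_gt addB zB _ _ hhk,
          insAdd_of_gt addB zB _ _ (hhk.trans hgh)]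
  · rintro (_ | ⟨g, s⟩) (_ | ⟨h, t⟩)
    · exact Or.inr rfl
    · exact Or.inr rfl
    · exact Or.inl trivial
    · rcases lt_trichotomy g h with hgh | rfl | hgh
      · exact Or.inr (insAdd_of_lt addB zB s t hgh).symm
      · rw [insAdd_same addB zB g s t (hne s t)]
        rcases (hle s.1 t.1).lt_or_eq with hlt | heq
        · exact Or.inl (Or.inr ⟨rfl, hlt⟩)
        · exact Or.inr (congrArg (fun b => some (g, b)) (Subtype.ext heq))
      · rw [insAdd_of_gt addB zB s t hgh]
        exact Or.inl (Or.inl hgh)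
end

section
/- Suppose A is an ordered abelian group or ordered abelian semi-group in which every nonempty subset that is bounded above has a greatest element, and B is an ordered abelian semi-group which has the least upper bound property and has a greatest element. Then A ⊼ B has the least upper bound property: every nonempty subset of A ⊼ B that is bounded above has a least upper bound. -/
theorem insLe_some_some {A B : Type*} [LinearOrder A] [LinearOrder B] {zB : B}
    (x y : A × {b : B // b ≠ zB}) :
    insLe zB (some x) (some y) ↔ x.1 < y.1 ∨ (x.1 = y.1 ∧ x.2.1 ≤ y.2.1) := by
  simp only [insLe, insLt, Option.some.injEq, Prod.ext_iff, Subtype.ext_iff, le_iff_lt_or_eq]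
  tauto

theorem not_insLe_some_none {A B : Type*} [LinearOrder A] [LinearOrder B] {zB : B}
    (x : A × {b : B // b ≠ zB}) : ¬ insLe zB (some x) none := by
  simp [insLe, insLt]

theorem none_insLe {A B : Type*} [LinearOrder A] [LinearOrder B] {zB : B}
    (x : Ins A zB) : insLe zB none x := by
  cases x <;> simp [insLe, insLt]

/-- If every nonempty subset of `A` that is bounded above has a greatest element, and the
ordered abelian semi-group `B` has the least upper bound property and a greatest element,
then `A ⊼ B` has the least upper bound property. -/
theorem stmt8 {A B : Type*} [LinearOrder A] [LinearOrder B]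
    (addA : A → A → A) (zA : A) (negA : A → A) (addB : B → B → B) (zB : B)
    (hA : IsOrdAbGroup addA zA negA ∨ IsOrdAbSemigroup addA zA)
    (hB : IsOrdAbSemigroup addB zB)
    (hAmax : ∀ T : Set A, T.Nonempty → BddAbove T → ∃ m ∈ T, ∀ a ∈ T, a ≤ m)
    (hBlub : ∀ T : Set B, T.Nonempty → BddAbove T → ∃ l : B, IsLUB T l)
    (hBtop : ∃ m : B, ∀ b : B, b ≤ m) :
    ∀ S : Set (Ins A zB), S.Nonempty → (∃ u : Ins A zB, ∀ x ∈ S, insLe zB x u) →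
      ∃ l : Ins A zB, (∀ x ∈ S, insLe zB x l) ∧
        ∀ u : Ins A zB, (∀ x ∈ S, insLe zB x u) → insLe zB l u := by
  rintro S - ⟨u, hu⟩
  by_cases hS : ∃ x : A × {b : B // b ≠ zB}, some x ∈ S
  · obtain ⟨x₀, hx₀⟩ := hS
    have hTb : BddAbove {a : A | ∃ s : {b : B // b ≠ zB}, some (a, s) ∈ S} := by
      cases u with
      | none => exact absurd (hu _ hx₀) (not_insLe_some_none x₀)
      | some y =>
        refine ⟨y.1, ?_⟩
        rintro a ⟨s, hs⟩
        rcases (insLe_some_some _ _).1 (hu _ hs) with h | h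
        · exact h.le
        · exact h.1.le
    obtain ⟨m, ⟨s₀, hs₀⟩, hm⟩ :=
      hAmax {a : A | ∃ s : {b : B // b ≠ zB}, some (a, s) ∈ S} ⟨x₀.1, x₀.2, hx₀⟩ hTb
    obtain ⟨t, ht⟩ := hBtop
    obtain ⟨l, hl⟩ := hBlub {b : B | ∃ h : b ≠ zB, some (m, ⟨b, h⟩) ∈ S}
      ⟨s₀.1, s₀.2, hs₀⟩ ⟨t, fun b _ => ht b⟩
    have hl0 : l ≠ zB := by
      intro h
      have hle : s₀.1 ≤ l := hl.1 ⟨s₀.2, hs₀⟩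
      exact s₀.2 (le_antisymm (h ▸ hle) (hB.2.2.2.2.1 _))
    refine ⟨some (m, ⟨l, hl0⟩), ?_, ?_⟩
    · rintro (_ | ⟨a, s⟩) hx
      · exact none_insLe _
      · rw [insLe_some_some]
        rcases (hm a ⟨s, hx⟩).lt_or_eq with h | rfl
        · exact Or.inl h
        · exact Or.inr ⟨rfl, hl.1 ⟨s.2, hx⟩⟩
    · rintro (_ | ⟨g, r⟩) hv
      · exact absurd (hv _ hs₀) (not_insLe_some_none _)
      · rw [insLe_some_some]
        rcases (insLe_some_some _ _).1 (hv _ hs₀) with h | ⟨h, -⟩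
        · exact Or.inl h
        · refine Or.inr ⟨h, hl.2 ?_⟩
          rintro b ⟨hb, hbS⟩
          rcases (insLe_some_some _ _).1 (hv _ hbS) with h' | h'
          · exact absurd h h'.ne
          · exact h'.2
  · refine ⟨none, ?_, fun v _ => none_insLe v⟩
    rintro (_ | x) hx
    · exact none_insLe _
    · exact absurd ⟨x, hx⟩ hS
end

section
/- Suppose A is an ordered abelian group or ordered abelian semi-group in which every nonempty subset that is bounded above has a greatest element and every nonempty subset has a least element, and B is an ordered abelian semi-group which has the least upper bound property and has a least positive element p (i.e., p > 0 and p ≤ b for all b > 0 in B). Then A ⊼ B has the least upper bound property: every nonempty subset of A ⊼ B that is bounded above has a least upper bound. -/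
/-- If every nonempty subset of `A` that is bounded above has a greatest element and every
nonempty subset of `A` has a least element, and the ordered abelian semi-group `B` has the
least upper bound property and a least positive element `p`, then `A ⊼ B` has the least
upper bound property. -/
theorem stmt9 {A B : Type*} [LinearOrder A] [LinearOrder B]
    (addA : A → A → A) (zA : A) (negA : A → A) (addB : B → B → B) (zB : B)
    (hA : IsOrdAbGroup addA zA negA ∨ IsOrdAbSemigroup addA zA)
    (hB : IsOrdAbSemigroup addB zB)
    (hAmax : ∀ T : Set A, T.Nonempty → BddAbove T → ∃ m ∈ T, ∀ a ∈ T, a ≤ m)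
    (hAleast : ∀ T : Set A, T.Nonempty → ∃ m ∈ T, ∀ a ∈ T, m ≤ a)
    (hBlub : ∀ T : Set B, T.Nonempty → BddAbove T → ∃ l : B, IsLUB T l)
    (hBp : ∃ p : B, zB < p ∧ ∀ b : B, zB < b → p ≤ b) :
    ∀ S : Set (Ins A zB), S.Nonempty → (∃ u : Ins A zB, ∀ x ∈ S, insLe zB x u) →
      ∃ l : Ins A zB, (∀ x ∈ S, insLe zB x l) ∧
        ∀ u : Ins A zB, (∀ x ∈ S, insLe zB x u) → insLe zB l u := by
  obtain ⟨-, -, -, -, hB0, -⟩ := hB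
  obtain ⟨p, hp0, hp⟩ := hBp
  have hpos : ∀ b : B, b ≠ zB → zB < b := fun b hb => lt_of_le_of_ne (hB0 b) hb.symm
  have none_le : ∀ x : Ins A zB, insLe zB none x := by
    rintro (_ | x)
    · exact Or.inr rfl
    · exact Or.inl trivial
  have some_le_none : ∀ x : A × {b : B // b ≠ zB}, ¬ insLe zB (some x) none := by
    rintro x (h | h)
    · exact h
    · cases h
  have some_le : ∀ (g h : A) (s t : {b : B // b ≠ zB}),
      insLe zB (some (g, s)) (some (h, t)) ↔ g < h ∨ (g = h ∧ s.1 ≤ t.1) := by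
    intro g h s t
    simp only [insLe, insLt, Option.some.injEq, Prod.mk.injEq, Subtype.ext_iff, le_iff_lt_or_eq]
    tauto
  rintro S - ⟨u, hu⟩
  by_cases hne : ∃ x, some x ∈ S
  swap
  · refine ⟨none, ?_, fun v _ => none_le v⟩
    rintro (_ | x) hx
    · exact none_le _
    · exact absurd ⟨x, hx⟩ hne
  obtain ⟨x₀, hx₀⟩ := hne
  obtain _ | ⟨g, s⟩ := u
  · exact absurd (hu _ hx₀) (some_le_none _)
  have hfst : ∀ (a : A) (b : {b : B // b ≠ zB}), some (a, b) ∈ S → a ≤ g := by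
    intro a b hab
    rcases (some_le _ _ _ _).1 (hu _ hab) with h | h
    · exact h.le
    · exact h.1.le
  obtain ⟨m, ⟨b₀, hb₀⟩, hm⟩ := hAmax {a | ∃ b, some (a, b) ∈ S} ⟨x₀.1, x₀.2, hx₀⟩
    ⟨g, fun a ⟨b, hab⟩ => hfst a b hab⟩
  let F : Set B := {b | ∃ hb : b ≠ zB, some (m, ⟨b, hb⟩) ∈ S}
  have hF₀ : b₀.1 ∈ F := ⟨b₀.2, hb₀⟩
  -- An upper bound of `S` lies strictly above the fibre over `m`, or bounds `F` inside that fibre.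
  have hub : ∀ (h : A) (t : {b : B // b ≠ zB}), (∀ x ∈ S, insLe zB x (some (h, t))) →
      m < h ∨ (m = h ∧ t.1 ∈ upperBounds F) := by
    intro h t hv
    rcases (some_le _ _ _ _).1 (hv _ hb₀) with hlt | ⟨rfl, -⟩
    · exact Or.inl hlt
    · refine Or.inr ⟨rfl, ?_⟩
      rintro b ⟨hb, hbS⟩
      rcases (some_le _ _ _ _).1 (hv _ hbS) with h' | h'
      · exact absurd h' (lt_irrefl _)
      · exact h'.2
  by_cases hbd : BddAbove F
  · obtain ⟨l, hl⟩ := hBlub F ⟨_, hF₀⟩ hbd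
    have hl0 : l ≠ zB := ((hpos _ b₀.2).trans_le (hl.1 hF₀)).ne'
    refine ⟨some (m, ⟨l, hl0⟩), ?_, ?_⟩
    · rintro (_ | ⟨a, b⟩) hx
      · exact none_le _
      · rw [some_le]
        rcases (hm a ⟨b, hx⟩).lt_or_eq with h | rfl
        · exact Or.inl h
        · exact Or.inr ⟨rfl, hl.1 ⟨b.2, hx⟩⟩
    · rintro (_ | ⟨h, t⟩) hv
      · exact absurd (hv _ hb₀) (some_le_none _)
      · exact (some_le _ _ _ _).2 ((hub h t hv).imp_right fun k => ⟨k.1, hl.2 k.2⟩)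
  · have habove : ∀ (h : A) (t : {b : B // b ≠ zB}), (∀ x ∈ S, insLe zB x (some (h, t))) →
        m < h := fun h t hv => (hub h t hv).resolve_right fun k => hbd ⟨_, k.2⟩
    obtain ⟨m', hmm', hleast⟩ := hAleast {a | m < a} ⟨g, habove g s hu⟩
    refine ⟨some (m', ⟨p, hp0.ne'⟩), ?_, ?_⟩
    · rintro (_ | ⟨a, b⟩) hx
      · exact none_le _
      · exact (some_le _ _ _ _).2 (Or.inl ((hm a ⟨b, hx⟩).trans_lt hmm'))
    · rintro (_ | ⟨h, t⟩) hv
      · exact absurd (hv _ hb₀) (some_le_none _)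
      · rw [some_le]
        exact (hleast h (habove h t hv)).lt_or_eq.imp_right fun k => ⟨k, hp _ (hpos _ t.2)⟩
end

section
/- Suppose A is an ordered abelian semi-group in which every nonempty subset that is bounded above has a greatest element and every nonempty subset has a least element, and B is an ordered abelian semi-group which has the least upper bound property and has a least positive element p (i.e., p > 0 and p ≤ b for all b > 0 in B). Then A ⊻ B has the least upper bound property: every nonempty subset of A ⊻ B that is bounded above has a least upper bound. -/
/-- The lexicographic strict order on `A × B` (the order of the s-insertion `A ⊻ B`). -/
def lexLt {A B : Type*} (ltA : A → A → Prop) (ltB : B → B → Prop) (x y : A × B) : Prop :=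
  ltA x.1 y.1 ∨ (x.1 = y.1 ∧ ltB x.2 y.2)

/-- The corresponding non-strict order on `A ⊻ B`. -/
def lexLe {A B : Type*} [LT A] [LT B] (x y : A × B) : Prop :=
  lexLt (· < ·) (· < ·) x y ∨ x = y

/-- The usual description of the non-strict lexicographic order. -/
theorem lexLe_iff {A B : Type*} [LinearOrder A] [LinearOrder B] (x y : A × B) :
    lexLe x y ↔ x.1 < y.1 ∨ (x.1 = y.1 ∧ x.2 ≤ y.2) := by
  unfold lexLe lexLt
  rw [Prod.ext_iff, le_iff_lt_or_eq]
  tauto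

/-- If every nonempty subset of `A` that is bounded above has a greatest element and every
nonempty subset of `A` has a least element, and the ordered abelian semi-group `B` has the
least upper bound property and a least positive element `p`, then the s-insertion `A ⊻ B`
has the least upper bound property. -/
theorem stmt10 {A B : Type*} [LinearOrder A] [LinearOrder B]
    (addA : A → A → A) (zA : A) (addB : B → B → B) (zB : B)
    (hA : IsOrdAbSemigroup addA zA) (hB : IsOrdAbSemigroup addB zB)
    (hAmax : ∀ T : Set A, T.Nonempty → BddAbove T → ∃ m ∈ T, ∀ a ∈ T, a ≤ m)
    (hAleast : ∀ T : Set A, T.Nonempty → ∃ m ∈ T, ∀ a ∈ T, m ≤ a)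
    (hBlub : ∀ T : Set B, T.Nonempty → BddAbove T → ∃ l : B, IsLUB T l)
    (hBp : ∃ p : B, zB < p ∧ ∀ b : B, zB < b → p ≤ b) :
    ∀ S : Set (A × B), S.Nonempty → (∃ u : A × B, ∀ x ∈ S, lexLe x u) →
      ∃ l : A × B, (∀ x ∈ S, lexLe x l) ∧
        ∀ u : A × B, (∀ x ∈ S, lexLe x u) → lexLe l u := by
  intro S ⟨x₀, hx₀⟩ ⟨u₀, hu₀⟩
  simp only [lexLe_iff] at hu₀ ⊢
  have fst_le : ∀ u : A × B,
      (∀ x ∈ S, x.1 < u.1 ∨ (x.1 = u.1 ∧ x.2 ≤ u.2)) → ∀ x ∈ S, x.1 ≤ u.1 := by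
    intro u hu x hx
    rcases hu x hx with h | h
    · exact h.le
    · exact h.1.le
  obtain ⟨m, ⟨y, hyS, rfl⟩, hm⟩ := hAmax (Prod.fst '' S) ⟨_, x₀, hx₀, rfl⟩
    ⟨u₀.1, by rintro _ ⟨x, hx, rfl⟩; exact fst_le u₀ hu₀ x hx⟩
  replace hm : ∀ x ∈ S, x.1 ≤ y.1 := fun x hx => hm _ ⟨x, hx, rfl⟩
  -- An upper bound of `S` with first coordinate `y.1` bounds the fibre over `y.1`.
  have fibre_le : ∀ u : A × B, (∀ x ∈ S, x.1 < u.1 ∨ (x.1 = u.1 ∧ x.2 ≤ u.2)) →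
      y.1 = u.1 → u.2 ∈ upperBounds {b : B | (y.1, b) ∈ S} := by
    intro u hu h b hb
    rcases hu _ hb with h' | h'
    · exact absurd h h'.ne
    · exact h'.2
  by_cases hT : BddAbove {b : B | (y.1, b) ∈ S}
  · obtain ⟨l, hl⟩ := hBlub _ ⟨y.2, hyS⟩ hT
    refine ⟨(y.1, l), fun x hx => ?_, fun u hu => ?_⟩
    · rcases (hm x hx).lt_or_eq with h | h
      · exact Or.inl h
      · refine Or.inr ⟨h, hl.1 ?_⟩
        change (y.1, x.2) ∈ S
        rw [← h]
        exact hx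
    · rcases (fst_le u hu y hyS).lt_or_eq with h | h
      · exact Or.inl h
      · exact Or.inr ⟨h, hl.2 (fibre_le u hu h)⟩
  · have fst_lt : ∀ u : A × B,
        (∀ x ∈ S, x.1 < u.1 ∨ (x.1 = u.1 ∧ x.2 ≤ u.2)) → y.1 < u.1 := fun u hu =>
      (fst_le u hu y hyS).lt_of_ne fun h => hT ⟨u.2, fibre_le u hu h⟩
    obtain ⟨a, ha, hmin⟩ := hAleast (Set.Ioi y.1) ⟨u₀.1, fst_lt u₀ hu₀⟩
    refine ⟨(a, zB), fun x hx => Or.inl ((hm x hx).trans_lt ha), fun u hu => ?_⟩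
    rcases (hmin u.1 (fst_lt u hu)).lt_or_eq with h | h
    · exact Or.inl h
    · exact Or.inr ⟨h, hB.2.2.2.2.1 u.2⟩
end

section
/- (Bayes' Theorem for probability 𝕡-measures.) Let (X, Σ) be a measurable space, let ν : Σ → 𝕡 be finitely additive with ν(∅) = 0, and let A₁, …, Aₙ ∈ Σ be a finite partition of X into pairwise disjoint measurable sets with ⋃ⱼ Aⱼ = X. For events A, B ∈ Σ with ν(B) ≠ 0 define the conditional probability P(A|B) = ν(A ∩ B) / ν(B), using the division of the semi-field 𝕡. If ν(B) ≠ 0 and ν(Aⱼ) ≠ 0 for all j, then ν(B) = Σⱼ P(B|Aⱼ)·ν(Aⱼ), and for each i: P(Aᵢ|B) = P(B|Aᵢ)·ν(Aᵢ) / (Σⱼ P(B|Aⱼ)·ν(Aⱼ)), where sums and products are taken in 𝕡. -/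
/-!
Dividing by `ν (A j) ≠ 0` and multiplying back is the identity in the semi-field
(`Pmul_Pdiv_cancel`), so the `j`-th summand is just `ν (B ∩ A j)`. Finite additivity along the
partition (`measure_inter_iUnion_list`) then identifies the sum with `ν B`, and Bayes' formula
is the definition of `P(Aᵢ|B)` rewritten with these two identities.
-/

/-- The positive reals `(0,∞)`. -/
abbrev PosR : Type := {t : ℝ // 0 < t}

/-- `𝕡 = {0} ∪ (ℤ × (0,∞))`; `none` plays the role of the zero element `0`. -/
abbrev PP : Type := Option (ℤ × PosR)

/-- The addition of `𝕡`: `(i,t)+(j,u) = (i,t+u)` if `i = j`, `(i,t)` if `i > j`,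
`(j,u)` if `j > i`, and `0` is the additive identity. -/
noncomputable def Padd : PP → PP → PP
  | none, y => y
  | x, none => x
  | some x, some y =>
    if x.1 < y.1 then some y
    else if y.1 < x.1 then some x
    else some (x.1, ⟨x.2.1 + y.2.1, add_pos x.2.2 y.2.2⟩)

/-- The multiplication of `𝕡`: `(i,t)(j,u) = (i+j, tu)`, and `0·x = x·0 = 0`. -/
noncomputable def Pmul : PP → PP → PP
  | none, _ => none
  | _, none => none
  | some x, some y => some (x.1 + y.1, ⟨x.2.1 * y.2.1, mul_pos x.2.2 y.2.2⟩)

/-- The multiplicative inverse in the semi-field `𝕡`: `(i,t)⁻¹ = (-i, 1/t)`. -/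
noncomputable def Pinv : PP → PP
  | none => none
  | some x => some (-x.1, ⟨1 / x.2.1, one_div_pos.mpr x.2.2⟩)

/-- Division in the semi-field `𝕡`. -/
noncomputable def Pdiv (x y : PP) : PP := Pmul x (Pinv y)

/-- Finite sums in `𝕡`. -/
noncomputable def Psum (l : List PP) : PP := l.foldr Padd none

theorem Pmul_Pdiv_cancel (x : PP) {y : PP} (hy : y ≠ none) : Pmul (Pdiv x y) y = x := by
  rcases y with _ | ⟨j, u, hu⟩
  · exact absurd rfl hy
  · rcases x with _ | ⟨i, t, ht⟩
    · rfl
    · have hu0 : u ≠ 0 := hu.ne'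
      simp [Pdiv, Pinv, Pmul, hu0]

/-- Finite additivity, iterated along a duplicate-free list of indices. -/
theorem measure_inter_iUnion_list {X ι : Type*} [MeasurableSpace X] (ν : Set X → PP)
    (h0 : ν ∅ = none)
    (hadd : ∀ E F : Set X, MeasurableSet E → MeasurableSet F → Disjoint E F →
      ν (E ∪ F) = Padd (ν E) (ν F))
    (A : ι → Set X) (hAmeas : ∀ j, MeasurableSet (A j))
    (hAdisj : ∀ i j, i ≠ j → Disjoint (A i) (A j))
    (B : Set X) (hB : MeasurableSet B) (l : List ι) (hl : l.Nodup) :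
    ν (B ∩ ⋃ j ∈ l, A j) = Psum (l.map fun j => ν (B ∩ A j)) := by
  induction l with
  | nil => simpa [Psum] using h0
  | cons a l ih =>
    obtain ⟨hal, hl⟩ := List.nodup_cons.mp hl
    have hset : (B ∩ ⋃ j ∈ a :: l, A j) = (B ∩ A a) ∪ (B ∩ ⋃ j ∈ l, A j) := by
      ext x
      simp [and_or_left]
    have hmeas : MeasurableSet (⋃ j ∈ l, A j) :=
      MeasurableSet.biUnion l.finite_toSet.countable fun j _ => hAmeas j
    have hdisj : Disjoint (A a) (⋃ j ∈ l, A j) := by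
      simp only [Set.disjoint_iUnion_right]
      exact fun j hj => hAdisj a j fun h => hal (h ▸ hj)
    rw [hset, hadd _ _ (hB.inter (hAmeas a)) (hB.inter hmeas)
      (hdisj.mono Set.inter_subset_right Set.inter_subset_right), ih hl]
    rfl

/-- Bayes' Theorem for probability `𝕡`-measures: if `ν` is finitely additive with
`ν ∅ = 0`, `A₁,…,Aₙ` is a measurable partition of `X`, `ν B ≠ 0` and `ν (A j) ≠ 0`
for all `j`, then with `P(A|B) = ν(A ∩ B)/ν(B)`:
`ν B = Σⱼ P(B|Aⱼ)·ν(Aⱼ)` and `P(Aᵢ|B) = P(B|Aᵢ)·ν(Aᵢ) / Σⱼ P(B|Aⱼ)·ν(Aⱼ)`. -/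
theorem stmt16 {X : Type*} [MeasurableSpace X] (ν : Set X → PP)
    (h0 : ν ∅ = none)
    (hadd : ∀ E F : Set X, MeasurableSet E → MeasurableSet F → Disjoint E F →
      ν (E ∪ F) = Padd (ν E) (ν F))
    (n : ℕ) (A : Fin n → Set X)
    (hAmeas : ∀ j : Fin n, MeasurableSet (A j))
    (hAdisj : ∀ i j : Fin n, i ≠ j → Disjoint (A i) (A j))
    (hAcover : (⋃ j : Fin n, A j) = Set.univ)
    (B : Set X) (hB : MeasurableSet B)
    (hBne : ν B ≠ none) (hAne : ∀ j : Fin n, ν (A j) ≠ none) :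
    ν B = Psum ((List.finRange n).map fun j =>
        Pmul (Pdiv (ν (B ∩ A j)) (ν (A j))) (ν (A j))) ∧
    ∀ i : Fin n,
      Pdiv (ν (A i ∩ B)) (ν B) =
        Pdiv (Pmul (Pdiv (ν (B ∩ A i)) (ν (A i))) (ν (A i)))
          (Psum ((List.finRange n).map fun j =>
            Pmul (Pdiv (ν (B ∩ A j)) (ν (A j))) (ν (A j)))) := by
  have hcancel : ∀ j, Pmul (Pdiv (ν (B ∩ A j)) (ν (A j))) (ν (A j)) = ν (B ∩ A j) :=
    fun j => Pmul_Pdiv_cancel _ (hAne j)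
  have hsum : ν B = Psum ((List.finRange n).map fun j => ν (B ∩ A j)) := by
    rw [← measure_inter_iUnion_list ν h0 hadd A hAmeas hAdisj B hB _ (List.nodup_finRange n)]
    simp [hAcover]
  simp only [hcancel, ← hsum, true_and]
  intro i
  rw [Set.inter_comm]
end

section
/- (Mixed insertion.) Let A be an ordered abelian group or ordered abelian semi-group, and for each a ∈ A let B_a be an ordered abelian semi-group. Then the mixed insertion A ⊼_{a∈A} B_a = {(a,b) : a ∈ A, b ∈ B_a∖{0}} ∪ {0}, with the order 0 < (g,s) for all (g,s) and (g,s) < (h,t) iff g < h, or g = h and s < t, and the addition (g,s)+(h,t) = (g,s) if g > h, = (h,t) if h > g, = (g, s+t) if g = h (sum taken in B_g), with 0 + x = x + 0 = x, is an ordered abelian semi-group: the order is total with least element 0, addition is commutative and associative with identity 0, and x + y ≥ y for all x, y. -/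
/-- The carrier `{(a,b) : a ∈ A, b ∈ B_a∖{0}} ∪ {0}` of the mixed insertion
`A ⊼_{a∈A} B_a`; `none` is the (new) zero element. -/
abbrev MixIns {A : Type*} (B : A → Type*) (zB : ∀ a, B a) : Type _ :=
  Option ((a : A) × {b : B a // b ≠ zB a})

/-- The order on the mixed insertion: `0 < (g,s)` for all `(g,s)`, and
`(g,s) < (h,t)` iff `g < h`, or `g = h` and `s < t`. -/
def mixLt {A : Type*} [LT A] {B : A → Type*} [∀ a, LT (B a)] (zB : ∀ a, B a) :
    MixIns B zB → MixIns B zB → Prop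
  | none, none => False
  | none, some _ => True
  | some _, none => False
  | some x, some y =>
    x.1 < y.1 ∨ ∃ h : x.1 = y.1, (cast (congrArg B h) x.2.1) < y.2.1

def mixLe {A : Type*} [LT A] {B : A → Type*} [∀ a, LT (B a)] (zB : ∀ a, B a)
    (x y : MixIns B zB) : Prop := mixLt zB x y ∨ x = y

open Classical in
/-- The addition of the mixed insertion: `(g,s)+(h,t) = (g,s)` if `g > h`, `(h,t)` if
`h > g`, `(g, s+t)` if `g = h` (sum taken in `B_g`), and `0 + x = x + 0 = x`. -/
noncomputable def mixAdd {A : Type*} [LinearOrder A] {B : A → Type*}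
    (addB : ∀ a, B a → B a → B a) (zB : ∀ a, B a) :
    MixIns B zB → MixIns B zB → MixIns B zB
  | none, y => y
  | x, none => x
  | some x, some y =>
    if hlt : x.1 < y.1 then some y
    else if hgt : y.1 < x.1 then some x
    else
      have h : x.1 = y.1 := le_antisymm (not_lt.1 hgt) (not_lt.1 hlt)
      if hz : addB y.1 (cast (congrArg B h) x.2.1) y.2.1 = zB y.1 then none
      else some ⟨y.1, ⟨addB y.1 (cast (congrArg B h) x.2.1) y.2.1, hz⟩⟩

section MixedInsertion

variable {A : Type*} [LinearOrder A] {B : A → Type*}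
  {addB : ∀ a, B a → B a → B a} {zB : ∀ a, B a}

theorem mixAdd_none_left (x : MixIns B zB) : mixAdd addB zB none x = x := by
  cases x <;> rfl

theorem mixAdd_none_right (x : MixIns B zB) : mixAdd addB zB x none = x := by
  cases x <;> rfl

theorem mixAdd_of_lt {a b : A} {s : {c : B a // c ≠ zB a}} {t : {c : B b // c ≠ zB b}}
    (h : a < b) : mixAdd addB zB (some ⟨a, s⟩) (some ⟨b, t⟩) = some ⟨b, t⟩ := by
  simp [mixAdd, h]

theorem mixAdd_of_gt {a b : A} {s : {c : B a // c ≠ zB a}} {t : {c : B b // c ≠ zB b}}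
    (h : b < a) : mixAdd addB zB (some ⟨a, s⟩) (some ⟨b, t⟩) = some ⟨a, s⟩ := by
  simp [mixAdd, h, h.not_gt]

variable [∀ a, LinearOrder (B a)]

theorem mixLt_of_lt {x y : (a : A) × {b : B a // b ≠ zB a}} (h : x.1 < y.1) :
    mixLt zB (some x) (some y) :=
  Or.inl h

/-- On a common first coordinate the transport in `mixLt` is along `rfl`, hence trivial. -/
theorem mixLt_same_iff {a : A} {s t : {b : B a // b ≠ zB a}} :
    mixLt zB (some ⟨a, s⟩) (some ⟨a, t⟩) ↔ s.1 < t.1 := by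
  simp [mixLt]

theorem mixLt_some_iff {a b : A} {s : {c : B a // c ≠ zB a}} {t : {c : B b // c ≠ zB b}} :
    mixLt zB (some ⟨a, s⟩) (some ⟨b, t⟩) ↔
      a < b ∨ ∃ h : a = b, cast (congrArg B h) s.1 < t.1 :=
  Iff.rfl

/-- A sum with a nonzero summand is nonzero, since `0 ≤ t ≤ s + t`. -/
theorem fibre_add_ne_zero (hB : ∀ a : A, IsOrdAbSemigroup (addB a) (zB a)) {a : A}
    (s t : {b : B a // b ≠ zB a}) : addB a s.1 t.1 ≠ zB a := by
  obtain ⟨-, -, -, -, hz, hle⟩ := hB a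
  intro h
  exact t.2 (le_antisymm ((hle s.1 t.1).trans_eq h) (hz t.1))

theorem mixAdd_same (hB : ∀ a : A, IsOrdAbSemigroup (addB a) (zB a)) {a : A}
    (s t : {b : B a // b ≠ zB a}) :
    mixAdd addB zB (some ⟨a, s⟩) (some ⟨a, t⟩) =
      some ⟨a, ⟨addB a s.1 t.1, fibre_add_ne_zero hB s t⟩⟩ := by
  simp [mixAdd, fibre_add_ne_zero hB s t]

theorem mixLt_trichotomy (x y : MixIns B zB) : mixLt zB x y ∨ x = y ∨ mixLt zB y x := by
  rcases x with _ | ⟨a, s⟩ <;> rcases y with _ | ⟨b, t⟩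
  · exact Or.inr (Or.inl rfl)
  · exact Or.inl trivial
  · exact Or.inr (Or.inr trivial)
  · rcases lt_trichotomy a b with h | rfl | h
    · exact Or.inl (mixLt_of_lt h)
    · rcases lt_trichotomy s.1 t.1 with h | h | h
      · exact Or.inl (mixLt_same_iff.2 h)
      · exact Or.inr (Or.inl (by rw [Subtype.ext h]))
      · exact Or.inr (Or.inr (mixLt_same_iff.2 h))
    · exact Or.inr (Or.inr (mixLt_of_lt h))

theorem mixLt_trans (x y z : MixIns B zB) (hxy : mixLt zB x y) (hyz : mixLt zB y z) :
    mixLt zB x z := by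
  rcases x with _ | ⟨a, s⟩ <;> rcases y with _ | ⟨b, t⟩ <;> rcases z with _ | ⟨c, u⟩ <;>
    first | trivial | exact hxy.elim | exact hyz.elim | skip
  rcases mixLt_some_iff.1 hxy with h₁ | ⟨rfl, h₁⟩ <;>
    rcases mixLt_some_iff.1 hyz with h₂ | ⟨rfl, h₂⟩
  · exact mixLt_of_lt (h₁.trans h₂)
  · exact mixLt_of_lt h₁
  · exact mixLt_of_lt h₂
  · exact mixLt_same_iff.2 (lt_trans h₁ h₂)

theorem mixLt_irrefl (x : MixIns B zB) : ¬ mixLt zB x x := by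
  rcases x with _ | ⟨a, s⟩
  · exact id
  · simp [mixLt_same_iff]

theorem mixLe_none (x : MixIns B zB) : mixLe zB none x := by
  cases x
  · exact Or.inr rfl
  · exact Or.inl trivial

theorem mixAdd_comm (hB : ∀ a : A, IsOrdAbSemigroup (addB a) (zB a)) (x y : MixIns B zB) :
    mixAdd addB zB x y = mixAdd addB zB y x := by
  rcases x with _ | ⟨a, s⟩
  · rw [mixAdd_none_left, mixAdd_none_right]
  rcases y with _ | ⟨b, t⟩
  · rw [mixAdd_none_left, mixAdd_none_right]
  rcases lt_trichotomy a b with h | rfl | h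
  · rw [mixAdd_of_lt h, mixAdd_of_gt h]
  · obtain ⟨-, -, -, hcomm, -, -⟩ := hB a
    simp only [mixAdd_same hB, hcomm s.1 t.1]
  · rw [mixAdd_of_lt h, mixAdd_of_gt h]

theorem mixAdd_assoc (hB : ∀ a : A, IsOrdAbSemigroup (addB a) (zB a)) (x y z : MixIns B zB) :
    mixAdd addB zB (mixAdd addB zB x y) z = mixAdd addB zB x (mixAdd addB zB y z) := by
  rcases x with _ | ⟨a, s⟩
  · simp only [mixAdd_none_left]
  rcases y with _ | ⟨b, t⟩
  · simp only [mixAdd_none_left, mixAdd_none_right]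
  rcases z with _ | ⟨c, u⟩
  · simp only [mixAdd_none_right]
  rcases lt_trichotomy a b with h₁ | rfl | h₁
  · rcases lt_trichotomy b c with h₂ | rfl | h₂
    · simp only [mixAdd_of_lt h₁, mixAdd_of_lt h₂, mixAdd_of_lt (h₁.trans h₂)]
    · simp only [mixAdd_of_lt h₁, mixAdd_same hB]
    · simp only [mixAdd_of_lt h₁, mixAdd_of_gt h₂]
  · rcases lt_trichotomy a c with h₂ | rfl | h₂
    · simp only [mixAdd_same hB, mixAdd_of_lt h₂]
    · obtain ⟨hassoc, -⟩ := hB a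
      simp only [mixAdd_same hB, hassoc]
    · simp only [mixAdd_same hB, mixAdd_of_gt h₂]
  · rcases lt_trichotomy b c with h₂ | rfl | h₂
    -- The middle term is dominated by both outer ones: each side is the sum of the outer terms.
    · simp only [mixAdd_of_gt h₁, mixAdd_of_lt h₂]
    · simp only [mixAdd_of_gt h₁, mixAdd_same hB]
    · simp only [mixAdd_of_gt h₁, mixAdd_of_gt h₂, mixAdd_of_gt (h₂.trans h₁)]

theorem mixLe_mixAdd (hB : ∀ a : A, IsOrdAbSemigroup (addB a) (zB a)) (x y : MixIns B zB) :
    mixLe zB y (mixAdd addB zB x y) := by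
  rcases y with _ | ⟨b, t⟩
  · exact mixLe_none _
  rcases x with _ | ⟨a, s⟩
  · exact Or.inr (mixAdd_none_left _).symm
  rcases lt_trichotomy a b with h | rfl | h
  · exact Or.inr (mixAdd_of_lt h).symm
  · obtain ⟨-, -, -, -, -, hle⟩ := hB a
    rw [mixAdd_same hB]
    rcases (hle s.1 t.1).lt_or_eq with h | h
    · exact Or.inl (mixLt_same_iff.2 h)
    · exact Or.inr (congrArg (fun r => some (Sigma.mk a r)) (Subtype.ext h))
  · rw [mixAdd_of_gt h]
    exact Or.inl (mixLt_of_lt h)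

end MixedInsertion

/-- If `A` is an ordered abelian group or ordered abelian semi-group and each `B_a` is an
ordered abelian semi-group, then the mixed insertion `A ⊼_{a∈A} B_a` is an ordered
abelian semi-group. -/
theorem stmt19 {A : Type*} [LinearOrder A] {B : A → Type*} [∀ a, LinearOrder (B a)]
    (addA : A → A → A) (zA : A) (negA : A → A)
    (addB : ∀ a, B a → B a → B a) (zB : ∀ a, B a)
    (hA : IsOrdAbGroup addA zA negA ∨ IsOrdAbSemigroup addA zA)
    (hB : ∀ a : A, IsOrdAbSemigroup (addB a) (zB a)) :
    -- the order is total (trichotomous, transitive, irreflexive)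
    (∀ x y : MixIns B zB, mixLt zB x y ∨ x = y ∨ mixLt zB y x) ∧
    (∀ x y z : MixIns B zB, mixLt zB x y → mixLt zB y z → mixLt zB x z) ∧
    (∀ x : MixIns B zB, ¬ mixLt zB x x) ∧
    -- 0 is the least element
    (∀ x : MixIns B zB, mixLe zB none x) ∧
    -- addition is commutative and associative with identity 0
    (∀ x y : MixIns B zB, mixAdd addB zB x y = mixAdd addB zB y x) ∧
    (∀ x y z : MixIns B zB,
      mixAdd addB zB (mixAdd addB zB x y) z = mixAdd addB zB x (mixAdd addB zB y z)) ∧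
    (∀ x : MixIns B zB, mixAdd addB zB none x = x ∧ mixAdd addB zB x none = x) ∧
    -- x + y ≥ y
    (∀ x y : MixIns B zB, mixLe zB y (mixAdd addB zB x y)) := by
  exact ⟨mixLt_trichotomy, mixLt_trans, mixLt_irrefl, mixLe_none, mixAdd_comm hB, mixAdd_assoc hB,
    fun x => ⟨mixAdd_none_left x, mixAdd_none_right x⟩, mixLe_mixAdd hB⟩
end
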